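/- (Lemma 2.4, second part, concrete form.) Let W ⊆ ℂ be a bounded open set, let g : ℂ → ℂ be smooth with tsupport g compact and contained in W, and let ρ : ℂ → ℝ be smooth with tsupport ρ compact and contained in W and with ρ identically 1 on a neighborhood of tsupport g. Then the function ρ·(Tg) is smooth with compact support contained in W and satisfies ∂̄(ρ·Tg) = g + (∂̄ρ)·(Tg). In particular the smooth compactly supported function g + (∂̄ρ)·(Tg) is ∂̄-exact via a smooth function with compact support contained in W. -/

import Mathlib

open MeasureTheory

/-- The Wirtinger derivative `∂̄f(z) = (1/2)·(∂ₓf(z) + i·∂_yf(z))`. -/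
noncomputable def dbar (f : ℂ → ℂ) (z : ℂ) : ℂ :=
  (1 / 2) * (fderiv ℝ f z 1 + Complex.I * fderiv ℝ f z Complex.I)

/-- The Cauchy transform `(Tg)(z) = (1/π) ∫_ℂ g(μ)/(z - μ) dA(μ)` (the integrand is `0`
at `μ = z` by the division-by-zero convention). -/
noncomputable def cauchyT (g : ℂ → ℂ) (z : ℂ) : ℂ :=
  (1 / (Real.pi : ℂ)) * ∫ μ : ℂ, g μ / (z - μ)

/-!
Write `e = exp (θ * I)`. At `w = r * e`, the polar-coordinate integrand `r * (∂̄h / w)` is half the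
sum of the derivative of `h` in the direction `e` and `I` times its derivative in the direction
`I * e`. The first integrates along each ray to `-h 0`; the second is, up to the factor `r`, a total
derivative along each circle and integrates to `0`. So `∫ ∂̄h / w = -π * h 0`, which after a
translation says `T (∂̄g) = g`. Since `T` is convolution with the locally integrable kernel
`1 / (π * w)`, it commutes with derivatives, so `∂̄ (T g) = g`, and the claim is the Leibniz rule
together with `ρ * g = g`.
-/

open Complex (I exp)
open scoped Real

section PolarCoordinates

variable {E F : Type*} [NormedAddCommGroup E] [NormedSpace ℝ E]
  [NormedAddCommGroup F] [NormedSpace ℝ F]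

lemma polarCoord_symm_eq_circleMap (p : ℝ × ℝ) :
    Complex.polarCoord.symm p = circleMap 0 p.1 p.2 := by
  rw [Complex.polarCoord_symm_apply, circleMap_zero, Complex.exp_mul_I, Complex.ofReal_cos,
    Complex.ofReal_sin]

lemma integral_Ioi_fderiv_smul_apply [CompleteSpace F] {h : E → F} (hh : ContDiff ℝ 1 h)
    (hc : HasCompactSupport h) {v : E} (hv : v ≠ 0) :
    ∫ r in Set.Ioi (0 : ℝ), fderiv ℝ h (r • v) v = -h 0 := by
  have hderiv (r : ℝ) : deriv (fun r : ℝ => h (r • v)) r = fderiv ℝ h (r • v) v := by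
    have hray : HasDerivAt (fun r : ℝ => r • v) v r := by
      simpa using (hasDerivAt_id r).smul_const v
    exact ((hh.differentiable one_ne_zero _).hasFDerivAt.comp_hasDerivAt r hray).deriv
  have hray : ContDiff ℝ 1 fun r : ℝ => h (r • v) := hh.comp (contDiff_id.smul contDiff_const)
  simpa [hderiv] using
    (hc.comp_isClosedEmbedding (isClosedEmbedding_smul_left hv)).integral_Ioi_deriv_eq hray 0

lemma integral_fderiv_circleMap_apply_tangent [CompleteSpace F] {h : ℂ → F}
    (hh : ContDiff ℝ 1 h) (c : ℂ) (r : ℝ) :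
    ∫ θ in -π..π, fderiv ℝ h (circleMap c r θ) (circleMap 0 r θ * I) = 0 := by
  have hderiv (θ : ℝ) : HasDerivAt (fun θ => h (circleMap c r θ))
      (fderiv ℝ h (circleMap c r θ) (circleMap 0 r θ * I)) θ :=
    (hh.differentiable one_ne_zero _).hasFDerivAt.comp_hasDerivAt θ (hasDerivAt_circleMap c r θ)
  have hcont : Continuous fun θ => fderiv ℝ h (circleMap c r θ) (circleMap 0 r θ * I) :=
    ((hh.continuous_fderiv one_ne_zero).comp (continuous_circleMap c r)).clm_apply
      ((continuous_circleMap 0 r).mul continuous_const)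
  have hclosed : circleMap c r π = circleMap c r (-π) := by
    rw [← periodic_circleMap c r (-π)]
    ring_nf
  rw [intervalIntegral.integral_eq_sub_of_hasDerivAt (fun θ _ => hderiv θ)
    (hcont.intervalIntegrable _ _), hclosed, sub_self]

lemma integrableOn_polarCoord_target_clm_apply {L : ℂ → E →L[ℝ] F} (hL : Continuous L)
    (hc : HasCompactSupport L) {u : ℝ → E} (hu : Continuous u) :
    IntegrableOn (fun p : ℝ × ℝ => L (circleMap 0 p.1 p.2) (u p.2)) polarCoord.target := by
  obtain ⟨R, hR⟩ := hc.isCompact.isBounded.subset_closedBall (0 : ℂ)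
  have hcont : Continuous fun p : ℝ × ℝ => L (circleMap 0 p.1 p.2) (u p.2) := by
    simp only [circleMap_zero]
    fun_prop
  refine (hcont.continuousOn.integrableOn_compact
    (isCompact_Icc (a := 0) (b := R) |>.prod (isCompact_Icc (a := -π) (b := π)))
    ).of_forall_sdiff_eq_zero polarCoord.open_target.measurableSet ?_
  rintro ⟨r, θ⟩ ⟨⟨hr, hθ⟩, hout⟩
  have hRr : R < |r| := by
    by_contra! hle
    exact hout ⟨⟨le_of_lt hr, (le_abs_self r).trans hle⟩, hθ.1.le, hθ.2.le⟩
  have hLzero : L (circleMap 0 r θ) = 0 := by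
    refine image_eq_zero_of_notMem_tsupport fun hmem => hRr.not_ge ?_
    simpa using hR hmem
  simp [hLzero]

variable [CompleteSpace F] {h : ℂ → F}

lemma integral_polarCoord_target_fderiv_radial (hh : ContDiff ℝ 1 h) (hc : HasCompactSupport h) :
    ∫ p in polarCoord.target, fderiv ℝ h (circleMap 0 p.1 p.2) (exp (p.2 * I)) =
      -((2 * π) • h 0) := by
  have hint := integrableOn_polarCoord_target_clm_apply (hh.continuous_fderiv one_ne_zero)
    (hc.fderiv ℝ) (u := fun θ => exp (θ * I)) (by fun_prop)
  have hray (θ : ℝ) :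
      ∫ r in Set.Ioi (0 : ℝ), fderiv ℝ h (circleMap 0 r θ) (exp (θ * I)) = -h 0 := by
    simpa only [circleMap_zero, Complex.real_smul] using
      integral_Ioi_fderiv_smul_apply hh hc (Complex.exp_ne_zero (θ * I))
  rw [polarCoord_target, IntegrableOn, Measure.volume_eq_prod, ← Measure.prod_restrict] at hint
  rw [polarCoord_target, Measure.volume_eq_prod, ← Measure.prod_restrict,
    integral_prod_symm _ hint]
  simp only [hray, setIntegral_const, Real.volume_real_Ioo_of_le (neg_le_self Real.pi_pos.le),
    sub_neg_eq_add, ← two_mul, smul_neg]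

lemma integral_polarCoord_target_fderiv_angular (hh : ContDiff ℝ 1 h)
    (hc : HasCompactSupport h) :
    ∫ p in polarCoord.target, fderiv ℝ h (circleMap 0 p.1 p.2) (I * exp (p.2 * I)) = 0 := by
  have hint := integrableOn_polarCoord_target_clm_apply (hh.continuous_fderiv one_ne_zero)
    (hc.fderiv ℝ) (u := fun θ => I * exp (θ * I)) (by fun_prop)
  rw [polarCoord_target, Measure.volume_eq_prod] at hint ⊢
  rw [setIntegral_prod _ hint]
  refine setIntegral_eq_zero_of_forall_eq_zero fun r (hr : 0 < r) => ?_
  have htangent (θ : ℝ) : fderiv ℝ h (circleMap 0 r θ) (circleMap 0 r θ * I) =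
      r • fderiv ℝ h (circleMap 0 r θ) (I * exp (θ * I)) := by
    rw [← map_smul, Complex.real_smul, circleMap_zero, mul_comm I, mul_assoc]
  have hcircle := integral_fderiv_circleMap_apply_tangent hh 0 r
  simp only [htangent] at hcircle
  rw [intervalIntegral.integral_smul,
    intervalIntegral.integral_of_le (neg_le_self Real.pi_pos.le),
    integral_Ioc_eq_integral_Ioo] at hcircle
  exact (smul_eq_zero.mp hcircle).resolve_left hr.ne'

end PolarCoordinates

section Dbar

lemma clm_apply_add_I_mul_apply_I_mul (D : ℂ →L[ℝ] ℂ) (v : ℂ) :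
    D v + I * D (I * v) = starRingEnd ℂ v * (D 1 + I * D I) := by
  have hv : v = v.re • (1 : ℂ) + v.im • I := by simp [Complex.re_add_im]
  have hIv : I * v = v.re • I - v.im • (1 : ℂ) := by
    apply Complex.ext <;> simp
  have hconj : starRingEnd ℂ v = v.re - v.im * I := by
    apply Complex.ext <;> simp
  rw [hIv, hconj]
  nth_rewrite 1 [hv]
  simp only [map_add, map_sub, map_smul]
  simp only [Complex.real_smul]
  linear_combination (v.im * D I) * Complex.I_sq

lemma smul_dbar_div_circleMap {h : ℂ → ℂ} {r : ℝ} (hr : r ≠ 0) (θ : ℝ) :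
    r • (dbar h (circleMap 0 r θ) / circleMap 0 r θ) =
      1 / 2 * (fderiv ℝ h (circleMap 0 r θ) (exp (θ * I)) +
        I * fderiv ℝ h (circleMap 0 r θ) (I * exp (θ * I))) := by
  have hconj : starRingEnd ℂ (exp (θ * I)) = (exp (θ * I))⁻¹ := by
    rw [← Complex.exp_conj, ← Complex.exp_neg]
    simp
  have hr' : (r : ℂ) ≠ 0 := mod_cast hr
  rw [clm_apply_add_I_mul_apply_I_mul, hconj, dbar, Complex.real_smul]
  nth_rewrite 3 [circleMap_zero]
  field_simp

lemma integral_dbar_div_self {h : ℂ → ℂ} (hh : ContDiff ℝ 1 h) (hc : HasCompactSupport h) :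
    ∫ w : ℂ, dbar h w / w = -(π * h 0) := by
  have hradial := integrableOn_polarCoord_target_clm_apply (hh.continuous_fderiv one_ne_zero)
    (hc.fderiv ℝ) (u := fun θ => exp (θ * I)) (by fun_prop)
  have hangular := integrableOn_polarCoord_target_clm_apply (hh.continuous_fderiv one_ne_zero)
    (hc.fderiv ℝ) (u := fun θ => I * exp (θ * I)) (by fun_prop)
  calc ∫ w : ℂ, dbar h w / w
      = ∫ p in polarCoord.target, p.1 • (dbar h (circleMap 0 p.1 p.2) / circleMap 0 p.1 p.2) := by
        rw [← Complex.integral_comp_polarCoord_symm]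
        simp only [polarCoord_symm_eq_circleMap]
    _ = ∫ p in polarCoord.target, 1 / 2 * (fderiv ℝ h (circleMap 0 p.1 p.2) (exp (p.2 * I)) +
          I * fderiv ℝ h (circleMap 0 p.1 p.2) (I * exp (p.2 * I))) :=
        setIntegral_congr_fun polarCoord.open_target.measurableSet fun p hp =>
          smul_dbar_div_circleMap (ne_of_gt hp.1) p.2
    _ = 1 / 2 * (-((2 * π) • h 0) + I * 0) := by
        rw [integral_const_mul, integral_add hradial (hangular.const_mul I), integral_const_mul,
          integral_polarCoord_target_fderiv_radial hh hc,
          integral_polarCoord_target_fderiv_angular hh hc]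
    _ = -(π * h 0) := by
        rw [Complex.real_smul]
        push_cast
        ring

lemma dbar_mul {f g : ℂ → ℂ} {z : ℂ} (hf : DifferentiableAt ℝ f z)
    (hg : DifferentiableAt ℝ g z) :
    dbar (fun w => f w * g w) z = dbar f z * g z + f z * dbar g z := by
  simp only [dbar, fderiv_fun_mul hf hg, add_apply, smul_apply, smul_eq_mul]
  ring

end Dbar

section CauchyTransform

lemma locallyIntegrable_inv : LocallyIntegrable fun w : ℂ => w⁻¹ :=
  locallyIntegrable_of_norm_le_rpow (C := 1) (α := 1) (by simp) (by simp)
    (.of_forall fun w => by simp [Real.rpow_neg_one]) measurable_inv.aestronglyMeasurable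

lemma cauchyT_eq_convolution (g : ℂ → ℂ) :
    cauchyT g = fun z => 1 / (π : ℂ) *
      convolution (fun w : ℂ => w⁻¹) g (ContinuousLinearMap.mul ℝ ℂ) volume z := by
  funext z
  rw [cauchyT, convolution_eq_swap]
  simp only [ContinuousLinearMap.mul_apply', div_eq_inv_mul]

variable {g : ℂ → ℂ}

lemma integrable_div_sub (hg : Continuous g) (hc : HasCompactSupport g) (z : ℂ) :
    Integrable fun μ => g μ / (z - μ) := by
  simpa only [ContinuousLinearMap.mul_apply', div_eq_inv_mul] using
    (hc.convolutionExists_right (ContinuousLinearMap.mul ℝ ℂ) locallyIntegrable_inv hg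
      z).integrable_swap

lemma contDiff_cauchyT {n : ℕ∞} (hg : ContDiff ℝ n g) (hc : HasCompactSupport g) :
    ContDiff ℝ n (cauchyT g) := by
  rw [cauchyT_eq_convolution]
  exact contDiff_const.mul (hc.contDiff_convolution_right _ locallyIntegrable_inv hg)

lemma fderiv_cauchyT_apply (hg : ContDiff ℝ 1 g) (hc : HasCompactSupport g) (z v : ℂ) :
    fderiv ℝ (cauchyT g) z v = cauchyT (fun w => fderiv ℝ g w v) z := by
  have hderiv := (hc.hasFDerivAt_convolution_right (ContinuousLinearMap.mul ℝ ℂ)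
    locallyIntegrable_inv hg z).const_mul (1 / (π : ℂ))
  rw [cauchyT_eq_convolution g, hderiv.fderiv, cauchyT_eq_convolution, smul_apply, smul_eq_mul,
    convolution_precompR_apply _ locallyIntegrable_inv (hc.fderiv ℝ)
      (hg.continuous_fderiv one_ne_zero)]

lemma dbar_cauchyT_eq_cauchyT_dbar (hg : ContDiff ℝ 1 g) (hc : HasCompactSupport g) (z : ℂ) :
    dbar (cauchyT g) z = cauchyT (dbar g) z := by
  have hint (v : ℂ) : Integrable fun μ => fderiv ℝ g μ v / (z - μ) :=
    integrable_div_sub ((hg.continuous_fderiv one_ne_zero).clm_apply continuous_const)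
      (hc.fderiv_apply ℝ v) z
  rw [dbar, fderiv_cauchyT_apply hg hc, fderiv_cauchyT_apply hg hc]
  simp only [cauchyT, dbar, mul_div_assoc, add_div]
  rw [integral_const_mul, integral_add (hint 1) ((hint I).const_mul I), integral_const_mul]
  ring

lemma cauchyT_dbar (hg : ContDiff ℝ 1 g) (hc : HasCompactSupport g) (z : ℂ) :
    cauchyT (dbar g) z = g z := by
  have htranslate (w : ℂ) : dbar (fun w => g (z + w)) w = dbar g (z + w) := by
    simp only [dbar, fderiv_comp_add_left]
  have hpompeiu : ∫ w : ℂ, dbar g (z + w) / w = -(π * g z) := by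
    simpa only [htranslate, add_zero] using integral_dbar_div_self (h := fun w => g (z + w))
      (hg.comp (contDiff_const.add contDiff_id)) (hc.comp_homeomorph (Homeomorph.addLeft z))
  rw [cauchyT, ← integral_add_left_eq_self _ z]
  simp only [sub_add_cancel_left, div_neg, integral_neg, hpompeiu]
  field_simp

theorem dbar_cauchyT (hg : ContDiff ℝ 1 g) (hc : HasCompactSupport g) (z : ℂ) :
    dbar (cauchyT g) z = g z := by
  rw [dbar_cauchyT_eq_cauchyT_dbar hg hc, cauchyT_dbar hg hc]

end CauchyTransform

lemma tsupport_ofReal {X : Type*} [TopologicalSpace X] (f : X → ℝ) :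
    tsupport (fun x => (f x : ℂ)) = tsupport f := by
  simp only [tsupport, Function.support, ne_eq, Complex.ofReal_eq_zero]

theorem rho_mul_cauchyT_dbar_general {n : ℕ∞} (hn : 1 ≤ n) {W : Set ℂ}
    {g : ℂ → ℂ} (hg : ContDiff ℝ n g) (hgc : HasCompactSupport g)
    {ρ : ℂ → ℂ} (hρ : ContDiff ℝ n ρ) (hρc : HasCompactSupport ρ) (hρW : tsupport ρ ⊆ W)
    (hρ1 : ∀ z ∈ Function.support g, ρ z = 1) :
    ContDiff ℝ n (fun z => ρ z * cauchyT g z) ∧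
      HasCompactSupport (fun z => ρ z * cauchyT g z) ∧
      (tsupport fun z => ρ z * cauchyT g z) ⊆ W ∧
      ∀ z : ℂ, dbar (fun w => ρ w * cauchyT g w) z = g z + dbar ρ z * cauchyT g z := by
  have hn' : (1 : WithTop ℕ∞) ≤ n := mod_cast hn
  have hT : ContDiff ℝ n (cauchyT g) := contDiff_cauchyT hg hgc
  refine ⟨hρ.mul hT, hρc.mul_right, (tsupport_mul_subset_left (f := ρ)).trans hρW, fun z => ?_⟩
  have hρg : ρ z * g z = g z := by
    by_cases hz : g z = 0
    · rw [hz, mul_zero]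
    · rw [hρ1 z hz, one_mul]
  rw [dbar_mul ((hρ.of_le hn').differentiable one_ne_zero z)
    ((hT.of_le hn').differentiable one_ne_zero z), dbar_cauchyT (hg.of_le hn') hgc, hρg, add_comm]

/-- Lemma 2.4, second part (concrete form): with `g` smooth with compact support in the
bounded open set `W` and `ρ` a smooth bump with compact support in `W` equal to `1` near
`tsupport g`, the function `ρ·(Tg)` is smooth with compact support in `W` and satisfies
`∂̄(ρ·Tg) = g + (∂̄ρ)·(Tg)`; in particular `g + (∂̄ρ)·(Tg)` is `∂̄`-exact via a smooth
function with compact support contained in `W`. -/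
theorem rho_mul_cauchyT_dbar (W : Set ℂ) (hW : IsOpen W) (hWb : Bornology.IsBounded W)
    (g : ℂ → ℂ) (hg : ContDiff ℝ (⊤ : ℕ∞) g) (hgc : IsCompact (tsupport g)) (hgW : tsupport g ⊆ W)
    (ρ : ℂ → ℝ) (hρ : ContDiff ℝ (⊤ : ℕ∞) ρ) (hρc : IsCompact (tsupport ρ)) (hρW : tsupport ρ ⊆ W)
    (hρ1 : ∃ V : Set ℂ, IsOpen V ∧ tsupport g ⊆ V ∧ ∀ z ∈ V, ρ z = 1) :
    (ContDiff ℝ (⊤ : ℕ∞) (fun z => (ρ z : ℂ) * cauchyT g z) ∧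
      IsCompact (tsupport fun z => (ρ z : ℂ) * cauchyT g z) ∧
      (tsupport fun z => (ρ z : ℂ) * cauchyT g z) ⊆ W ∧
      ∀ z : ℂ, dbar (fun w => (ρ w : ℂ) * cauchyT g w) z =
        g z + dbar (fun w => (ρ w : ℂ)) z * cauchyT g z) ∧
    ∃ h : ℂ → ℂ, ContDiff ℝ (⊤ : ℕ∞) h ∧ IsCompact (tsupport h) ∧ tsupport h ⊆ W ∧
      ∀ z : ℂ, dbar h z = g z + dbar (fun w => (ρ w : ℂ)) z * cauchyT g z := by
  obtain ⟨V, -, hgV, hV1⟩ := hρ1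
  have key := rho_mul_cauchyT_dbar_general (ρ := fun z => (ρ z : ℂ)) le_top hg hgc
    (Complex.ofRealCLM.contDiff.comp hρ) (HasCompactSupport.comp_left hρc Complex.ofReal_zero)
    ((tsupport_ofReal ρ).trans_subset hρW)
    (fun z hz => by rw [hV1 z (hgV (subset_tsupport g hz)), Complex.ofReal_one])
  exact ⟨key, _, key⟩
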